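/- arXiv:1701.07373 — 2 statements merged into one kernel-verified Lean document; each statement's English description precedes it below -/
import Mathlib

section
/- Let X be a standard Borel space, let κ be a Markov kernel from X to X, and for a probability measure μ on X let P_μ denote the law on the sequence space X^ℕ of the Markov chain (X₀, X₁, X₂, …) with initial distribution X₀ ∼ μ and transition kernel κ (the measure given by the Ionescu–Tulcea construction). Then for any two probability measures μ, ν on X one has KL(P_μ ‖ P_ν) = KL(μ ‖ ν). -/
open MeasureTheory ProbabilityTheory
open scoped ENNReal Classical

/-- The Kullback–Leibler divergence `KL(μ‖ν) = ∫ log(dμ/dν) dμ` if `μ ≪ ν` and the integral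
is well defined (finite), and `KL(μ‖ν) = ∞` otherwise. -/
noncomputable def klDiv {X : Type*} [MeasurableSpace X] (μ ν : Measure X) : ℝ≥0∞ :=
  if μ ≪ ν ∧ Integrable (fun x => Real.log (μ.rnDeriv ν x).toReal) μ
  then ENNReal.ofReal (∫ x, Real.log (μ.rnDeriv ν x).toReal ∂μ)
  else ∞

/-- The law of the first `n + 1` steps `(X₀, …, Xₙ)` of the Markov chain with initial
distribution `μ` and transition kernel `κ`: defined recursively, `X₀ ∼ μ`, and given
`(X₀, …, Xₙ)` the next state `X_{n+1}` is drawn from `κ(Xₙ, ·)`. -/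
noncomputable def chainLaw {X : Type*} [MeasurableSpace X] (κ : Kernel X X) (μ : Measure X) :
    (n : ℕ) → Measure (Fin (n + 1) → X)
  | 0 => μ.map (fun x => fun _ => x)
  | n + 1 =>
      ((chainLaw κ μ n).compProd
        (κ.comap (fun v => v (Fin.last n)) (measurable_pi_apply _))).map
        (fun p => Fin.snoc p.1 p.2)


lemma map_withDensity_comp_aux {A B : Type*} [MeasurableSpace A] [MeasurableSpace B]
    (ρ : Measure A) {g : A → B} (hg : Measurable g) {f : B → ℝ≥0∞} (hf : Measurable f) :
    (ρ.withDensity (fun a => f (g a))).map g = (ρ.map g).withDensity f := by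
  ext s hs
  rw [Measure.map_apply hg hs, withDensity_apply _ (hg hs), withDensity_apply _ hs,
    setLIntegral_map hs hf hg]

lemma compProd_withDensity_aux {A B : Type*} [MeasurableSpace A] [MeasurableSpace B]
    (ρ : Measure A) [SFinite ρ] (κ : Kernel A B) [IsSFiniteKernel κ]
    {f : A → ℝ≥0∞} (hf : Measurable f) [SFinite (ρ.withDensity f)] :
    (ρ.withDensity f).compProd κ = (ρ.compProd κ).withDensity (fun p => f p.1) := by
  ext s hs
  have h1 : Measurable fun p : A × B => f p.1 := hf.comp measurable_fst
  rw [Measure.compProd_apply hs, withDensity_apply _ hs, ← lintegral_indicator hs,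
    Measure.lintegral_compProd (h1.indicator hs),
    lintegral_withDensity_eq_lintegral_mul _ hf (Kernel.measurable_kernel_prodMk_left hs)]
  refine lintegral_congr fun a => ?_
  have h2 : ∀ b, s.indicator (fun p : A × B => f p.1) (a, b)
      = (Prod.mk a ⁻¹' s).indicator (fun _ => f a) b := fun b => rfl
  simp_rw [h2]
  rw [lintegral_indicator (measurable_prodMk_left hs), lintegral_const]
  simp

lemma chainLaw_sfinite {X : Type*} [MeasurableSpace X] (κ : Kernel X X)
    [IsMarkovKernel κ] (μ : Measure X) [SFinite μ] (n : ℕ) : SFinite (chainLaw κ μ n) := by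
  induction n with
  | zero => unfold chainLaw; infer_instance
  | succ n ih => unfold chainLaw; infer_instance

lemma chainLaw_withDensity {X : Type*} [MeasurableSpace X] (κ : Kernel X X)
    [IsMarkovKernel κ] (ν : Measure X) [SFinite ν] {f : X → ℝ≥0∞} (hf : Measurable f) (n : ℕ) :
    chainLaw κ (ν.withDensity f) n = (chainLaw κ ν n).withDensity (fun v => f (v 0)) := by
  induction n with
  | zero =>
    unfold chainLaw
    exact map_withDensity_comp_aux ν (g := fun x => fun _ : Fin (0 + 1) => x)
      (by fun_prop) (f := fun v => f (v 0)) (by fun_prop)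
  | succ n ih =>
    have := chainLaw_sfinite κ ν n
    have hm : Measurable (fun p : (Fin (n + 1) → X) × X =>
        (Fin.snoc p.1 p.2 : Fin (n + 1 + 1) → X)) := by
      refine measurable_pi_lambda _ fun i => ?_
      refine Fin.lastCases ?_ (fun j => ?_) i
      · simpa using measurable_snd
      · simp only [Fin.snoc_castSucc]
        fun_prop
    have hv : Measurable (fun v : Fin (n + 1) → X => f (v 0)) := by fun_prop
    have hv' : Measurable (fun v : Fin (n + 1 + 1) → X => f (v 0)) := by fun_prop
    unfold chainLaw
    rw [ih, compProd_withDensity_aux _ _ hv, ← map_withDensity_comp_aux _ hm hv']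
    congr 2
    

lemma ext_of_fin_marginals {X : Type*} [MeasurableSpace X] (P Q : Measure (ℕ → X))
    [IsFiniteMeasure P]
    (h : ∀ n : ℕ, P.map (fun ω => fun i : Fin (n + 1) => ω i)
      = Q.map (fun ω => fun i : Fin (n + 1) => ω i)) : P = Q := by
  refine IsProjectiveLimit.unique (P := fun I => P.map I.restrict) (fun I => rfl) (fun I => ?_)
  let r : (Fin (I.sup id + 1) → X) → (I → X) := fun v i =>
    v ⟨i, Nat.lt_succ_of_le (Finset.le_sup (f := id) i.2)⟩
  have hr : Measurable r := by fun_prop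
  have e : (I.restrict : (ℕ → X) → (I → X))
      = r ∘ (fun ω => fun i : Fin (I.sup id + 1) => ω i) := rfl
  have hp : Measurable (fun (ω : ℕ → X) => fun i : Fin (I.sup id + 1) => ω i) := by fun_prop
  change Q.map I.restrict = P.map I.restrict
  rw [e, ← Measure.map_map hr hp, ← Measure.map_map hr hp, h]

lemma map_zero_eq {X : Type*} [MeasurableSpace X] (κ : Kernel X X) (μ : Measure X)
    (P : Measure (ℕ → X))
    (h : ∀ n : ℕ, P.map (fun ω => fun i : Fin (n + 1) => ω i) = chainLaw κ μ n) :
    P.map (fun ω => ω 0) = μ := by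
  have h0 := congrArg (Measure.map (fun v : Fin (0 + 1) → X => v 0)) (h 0)
  unfold chainLaw at h0
  rw [Measure.map_map (by fun_prop) (by fun_prop), Measure.map_map (by fun_prop) (by fun_prop)]
    at h0
  simpa [Function.comp_def] using h0

/-- **Markov chains with the same transition mechanism preserve relative entropy:**
`KL(P_μ ‖ P_ν) = KL(μ ‖ ν)`. Here `X` is a standard Borel space, `κ` a Markov kernel from
`X` to itself, and `Pμ` (resp. `Pν`) is the law on the sequence space `X^ℕ` of the Markov
chain with initial distribution `μ` (resp. `ν`) and transition kernel `κ`, i.e. the unique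
measure given by the Ionescu–Tulcea construction, characterized by its finite-dimensional
distributions `chainLaw κ μ n`. -/
theorem klDiv_chain_eq_klDiv {X : Type*} [MeasurableSpace X] [StandardBorelSpace X]
    (κ : Kernel X X) [IsMarkovKernel κ]
    (μ ν : Measure X) [IsProbabilityMeasure μ] [IsProbabilityMeasure ν]
    (Pμ Pν : Measure (ℕ → X)) [IsProbabilityMeasure Pμ] [IsProbabilityMeasure Pν]
    (hPμ : ∀ n : ℕ, Pμ.map (fun ω => fun i : Fin (n + 1) => ω i) = chainLaw κ μ n)
    (hPν : ∀ n : ℕ, Pν.map (fun ω => fun i : Fin (n + 1) => ω i) = chainLaw κ ν n) :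
    klDiv Pμ Pν = klDiv μ ν := by
  have hev : Measurable (fun ω : ℕ → X => ω 0) := measurable_pi_apply 0
  have hμ0 := map_zero_eq κ μ Pμ hPμ
  have hν0 := map_zero_eq κ ν Pν hPν
  by_cases hac : μ ≪ ν
  · set f := μ.rnDeriv ν with hfdef
    have hf : Measurable f := Measure.measurable_rnDeriv _ _
    have hP : Pμ = Pν.withDensity (fun ω => f (ω 0)) := by
      refine ext_of_fin_marginals _ _ fun n => ?_
      have hp : Measurable (fun (ω : ℕ → X) => fun i : Fin (n + 1) => ω i) := by fun_prop
      have hv : Measurable (fun v : Fin (n + 1) → X => f (v 0)) := by fun_prop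
      have e := map_withDensity_comp_aux Pν hp hv
      simp only [Fin.val_zero] at e
      rw [e, hPμ, hPν, ← chainLaw_withDensity κ ν hf, hfdef, Measure.withDensity_rnDeriv_eq _ _ hac]
    have hacP : Pμ ≪ Pν := by
      rw [hP]; exact withDensity_absolutelyContinuous _ _
    have hd : Pμ.rnDeriv Pν =ᵐ[Pμ] fun ω => f (ω 0) := by
      refine hacP.ae_le ?_
      have h := Measure.rnDeriv_withDensity Pν (f := fun ω => f (ω 0)) (hf.comp hev)
      rwa [← hP] at h
    have hl : (fun ω => Real.log (Pμ.rnDeriv Pν ω).toReal)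
        =ᵐ[Pμ] (fun x => Real.log (f x).toReal) ∘ (fun ω => ω 0) := by
      filter_upwards [hd] with ω hω
      simp [hω]
    have hlm : Measurable (fun x => Real.log (f x).toReal) := by fun_prop
    have hI : Integrable (fun ω => Real.log (Pμ.rnDeriv Pν ω).toReal) Pμ
        ↔ Integrable (fun x => Real.log (f x).toReal) μ := by
      rw [integrable_congr hl, ← integrable_map_measure hlm.aestronglyMeasurable hev.aemeasurable,
        hμ0]
    have hE : ∫ ω, Real.log (Pμ.rnDeriv Pν ω).toReal ∂Pμ
        = ∫ x, Real.log (f x).toReal ∂μ := by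
      rw [integral_congr_ae hl]
      conv_rhs => rw [← hμ0]
      rw [integral_map hev.aemeasurable hlm.aestronglyMeasurable]
      rfl
    unfold klDiv
    rw [hE, hI]
    simp [hac, hacP, hfdef]
  · have hacP : ¬ Pμ ≪ Pν := fun h => hac (by
      have := h.map hev
      rwa [hμ0, hν0] at this)
    simp [klDiv, hac, hacP]
end

section
/- Let X be a complete separable metric space equipped with its Borel σ-algebra, let ν be a probability measure on X, and let (μₙ) be a sequence of probability measures on X converging weakly to a probability measure μ. If liminf_{n→∞} KL(μₙ ‖ ν) < ∞, then μ is absolutely continuous with respect to ν. -/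
open MeasureTheory Filter
open scoped ENNReal Classical BoundedContinuousFunction

/-- Young's inequality for the function `t log t + 1 - t`. -/
lemma klDiv_aux_young {t L : ℝ} (ht : 0 ≤ t) :
    t * L ≤ InformationTheory.klFun t + Real.exp L := by
  rw [InformationTheory.klFun_apply]
  rcases ht.eq_or_lt with rfl | ht
  · simp; positivity
  · have h := Real.add_one_le_exp (L - Real.log t)
    rw [Real.exp_sub, Real.exp_log ht, le_div_iff₀ ht] at h
    nlinarith

/-- The divergence of the statement agrees with Mathlib's on probability measures. -/
lemma klDiv_aux_eq {X : Type*} [MeasurableSpace X] (m ν : Measure X)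
    [IsProbabilityMeasure m] [IsProbabilityMeasure ν] :
    klDiv m ν = InformationTheory.klDiv m ν := by
  by_cases h : m ≪ ν ∧ Integrable (llr m ν) m
  · rw [InformationTheory.klDiv_of_ac_of_integrable h.1 h.2, klDiv]
    have h' : m ≪ ν ∧ Integrable (fun x => Real.log (m.rnDeriv ν x).toReal) m := h
    rw [if_pos h']
    simp [llr]
  · have h' : ¬ (m ≪ ν ∧ Integrable (fun x => Real.log (m.rnDeriv ν x).toReal) m) := h
    rw [klDiv, if_neg h']
    by_contra h2
    exact h (InformationTheory.klDiv_ne_top_iff.mp (Ne.symm h2))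

/-- Entropy inequality for sets. -/
lemma klDiv_aux_set {X : Type*} [MeasurableSpace X] (m ν : Measure X)
    [IsProbabilityMeasure m] [IsProbabilityMeasure ν] (A : Set X) (L : ℝ) :
    ENNReal.ofReal L * m A ≤ klDiv m ν + ENNReal.ofReal (Real.exp L) * ν A := by
  rw [klDiv_aux_eq]
  by_cases hac : m ≪ ν
  swap
  · simp [hac]
  rw [InformationTheory.klDiv_eq_lintegral_klFun_of_ac hac]
  calc ENNReal.ofReal L * m A = ENNReal.ofReal L * ∫⁻ x in A, m.rnDeriv ν x ∂ν := by
        rw [Measure.setLIntegral_rnDeriv hac]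
    _ = ∫⁻ x in A, ENNReal.ofReal L * m.rnDeriv ν x ∂ν := by
        rw [lintegral_const_mul _ (Measure.measurable_rnDeriv _ _)]
    _ ≤ ∫⁻ x in A, (ENNReal.ofReal (InformationTheory.klFun (m.rnDeriv ν x).toReal)
          + ENNReal.ofReal (Real.exp L)) ∂ν := by
        refine lintegral_mono_ae (ae_restrict_of_ae ?_)
        filter_upwards [Measure.rnDeriv_lt_top m ν] with x hx
        rw [← ENNReal.ofReal_add
          (InformationTheory.klFun_nonneg ENNReal.toReal_nonneg) (Real.exp_pos L).le]
        conv_lhs => rw [← ENNReal.ofReal_toReal hx.ne, mul_comm,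
          ← ENNReal.ofReal_mul ENNReal.toReal_nonneg]
        exact ENNReal.ofReal_le_ofReal (klDiv_aux_young ENNReal.toReal_nonneg)
    _ = (∫⁻ x in A, ENNReal.ofReal (InformationTheory.klFun (m.rnDeriv ν x).toReal) ∂ν)
          + ENNReal.ofReal (Real.exp L) * ν A := by
        rw [lintegral_add_right _ measurable_const]; simp
    _ ≤ _ := by gcongr; exact Measure.restrict_le_self

/-- **Absolute continuity of weak limits with bounded relative entropy.** On a complete
separable metric space with its Borel σ-algebra, if probability measures `μₙ` converge
weakly to `μ` (i.e. `∫ f dμₙ → ∫ f dμ` for every bounded continuous `f`) and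
`liminf_n KL(μₙ ‖ ν) < ∞`, then `μ ≪ ν`. -/
theorem absolutelyContinuous_of_liminf_klDiv_lt_top {X : Type*} [MetricSpace X]
    [CompleteSpace X] [TopologicalSpace.SeparableSpace X] [MeasurableSpace X] [BorelSpace X]
    (ν μ : Measure X) (μs : ℕ → Measure X)
    [IsProbabilityMeasure ν] [IsProbabilityMeasure μ] [∀ n, IsProbabilityMeasure (μs n)]
    (hweak : ∀ f : X →ᵇ ℝ,
      Tendsto (fun n => ∫ x, f x ∂(μs n)) atTop (nhds (∫ x, f x ∂μ)))
    (hfin : liminf (fun n => klDiv (μs n) ν) atTop < ∞) :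
    μ ≪ ν := by
  obtain ⟨C, hC1, hC2⟩ := exists_between hfin
  have hfreq : ∃ᶠ n in atTop, klDiv (μs n) ν < C := frequently_lt_of_liminf_lt (by isBoundedDefault) hC1
  have hopen : ∀ U : Set X, IsOpen U → μ U ≤ liminf (fun n => μs n U) atTop := by
    intro U hU
    let P : ProbabilityMeasure X := ⟨μ, inferInstance⟩
    let Ps : ℕ → ProbabilityMeasure X := fun n => ⟨μs n, inferInstance⟩
    have hP : Tendsto Ps atTop (nhds P) :=
      ProbabilityMeasure.tendsto_iff_forall_integral_tendsto.mpr hweak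
    exact ProbabilityMeasure.le_liminf_measure_open_of_tendsto hP hU
  have hbound : ∀ (L : ℝ) (U : Set X), IsOpen U →
      ENNReal.ofReal L * μ U ≤ C + ENNReal.ofReal (Real.exp L) * ν U := by
    intro L U hU
    by_contra! hlt
    have h1 : C + ENNReal.ofReal (Real.exp L) * ν U
        < liminf (fun n => ENNReal.ofReal L * μs n U) atTop := by
      refine hlt.trans_le ?_
      rw [ENNReal.liminf_const_mul_of_ne_top ENNReal.ofReal_ne_top]
      gcongr
      exact hopen U hU
    have h2 := eventually_lt_of_lt_liminf h1
    obtain ⟨n, hn1, hn2⟩ := (hfreq.and_eventually h2).exists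
    have h3 := klDiv_aux_set (μs n) ν U L
    exact absurd (hn2.trans_le h3) (not_lt.mpr (by gcongr))
  intro A hA
  have hA2 : ∀ n : ℕ, (n : ℝ≥0∞) * μ A ≤ C + 1 := by
    intro n
    have he : ENNReal.ofReal (Real.exp n) ≠ 0 := by simp [Real.exp_pos]
    obtain ⟨U, hAU, hU, hνU⟩ := A.exists_isOpen_lt_of_lt (μ := ν)
      (ENNReal.ofReal (Real.exp n))⁻¹ (by rw [hA]; simp)
    have := hbound n U hU
    rw [ENNReal.ofReal_natCast] at this
    calc (n : ℝ≥0∞) * μ A ≤ n * μ U := by gcongr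
      _ ≤ _ := this
      _ ≤ C + ENNReal.ofReal (Real.exp n) * (ENNReal.ofReal (Real.exp n))⁻¹ := by gcongr
      _ ≤ C + 1 := by gcongr; exact ENNReal.mul_inv_le_one _
  by_contra h0
  obtain ⟨n, hn⟩ := ENNReal.exists_nat_mul_gt h0 (ENNReal.add_ne_top.mpr ⟨hC2.ne, ENNReal.one_ne_top⟩)
  exact absurd hn (not_lt.mpr (hA2 n))
end
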